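/- arXiv:2601.15604 — 9 statements merged into one kernel-verified Lean document; each statement's English description precedes it below -/
import Mathlib

section
/- Let n be a nonempty finite index type, let P : Matrix n n ℝ be a symmetric positive definite matrix, let x : n → ℝ be a vector with xᵢ > 0 for every i, and let C > 0. Let î be an index maximizing the ratio Pᵢᵢ/xᵢ over all i ∈ n. Then the vector ĥ = C • e_î maximizes the objective h ↦ (hᵀ P h)/(hᵀ x) over the scaled simplex S_C = {h : n → ℝ | hᵢ ≥ 0 for all i, ∑ᵢ hᵢ = C}; that is, ĥ ∈ S_C and for every h ∈ S_C one has (hᵀ P h)/(hᵀ x) ≤ (ĥᵀ P ĥ)/(ĥᵀ x) = C · P_{îî}/x_{î}. -/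
open Matrix

/-- Theorem 1 of the paper: under the total-energy (ℓ¹) constraint, the
information-optimal encoding is the scaled standard basis vector at the index
maximizing `P i i / x i`. -/
theorem stmt_0 {n : Type*} [Fintype n] [DecidableEq n] [Nonempty n]
    (P : Matrix n n ℝ) (hP : P.PosDef) (x : n → ℝ) (hx : ∀ i, 0 < x i)
    (C : ℝ) (hC : 0 < C) (i0 : n) (hi0 : ∀ i, P i i / x i ≤ P i0 i0 / x i0) :
    (C • (Pi.single i0 1 : n → ℝ)) ∈ {h : n → ℝ | (∀ i, 0 ≤ h i) ∧ ∑ i, h i = C} ∧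
    (∀ h ∈ {h : n → ℝ | (∀ i, 0 ≤ h i) ∧ ∑ i, h i = C},
      h ⬝ᵥ P.mulVec h / h ⬝ᵥ x ≤
        (C • (Pi.single i0 1 : n → ℝ)) ⬝ᵥ P.mulVec (C • (Pi.single i0 1 : n → ℝ)) /
          ((C • (Pi.single i0 1 : n → ℝ)) ⬝ᵥ x)) ∧
    (C • (Pi.single i0 1 : n → ℝ)) ⬝ᵥ P.mulVec (C • (Pi.single i0 1 : n → ℝ)) /
        ((C • (Pi.single i0 1 : n → ℝ)) ⬝ᵥ x) = C * P i0 i0 / x i0 := by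
  have key : (C • (Pi.single i0 1 : n → ℝ)) ⬝ᵥ P.mulVec (C • (Pi.single i0 1 : n → ℝ)) /
        ((C • (Pi.single i0 1 : n → ℝ)) ⬝ᵥ x) = C * P i0 i0 / x i0 := by
    have := (hx i0).ne'
    have := hC.ne'
    simp [Matrix.mulVec_smul]
    field_simp
  refine ⟨⟨fun i => ?_, ?_⟩, ?_, key⟩
  · simp only [Pi.smul_apply, smul_eq_mul]
    by_cases hi : i = i0
    · subst hi; simp [hC.le]
    · simp [hi]
  · simp [← Finset.mul_sum]
  · rintro h ⟨h0, hs⟩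
    rw [key]
    have hxp : 0 < h ⬝ᵥ x := by
      have hnn : ∀ i ∈ Finset.univ, 0 ≤ h i * x i := fun i _ => mul_nonneg (h0 i) (hx i).le
      have h1 : 0 ≤ h ⬝ᵥ x := Finset.sum_nonneg hnn
      refine lt_of_le_of_ne h1 fun h2 => ?_
      have h3 := (Finset.sum_eq_zero_iff_of_nonneg hnn).1 h2.symm
      have h4 : ∑ i, h i = 0 := Finset.sum_eq_zero fun i hi =>
        (mul_eq_zero.1 (h3 i hi)).resolve_right (hx i).ne'
      linarith
    have hij : ∀ i j, P i j ≤ (P i i + P j j) / 2 := by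
      intro i j
      have h1 := hP.posSemidef.dotProduct_mulVec_nonneg (Pi.single i 1 - Pi.single j 1)
      have h2 : P j i = P i j := by simpa using hP.1.apply i j
      simp [Matrix.mulVec_sub, sub_dotProduct, dotProduct_sub, h2] at h1
      linarith
    have hM : ∀ i, P i i ≤ P i0 i0 / x i0 * x i := fun i => (div_le_iff₀ (hx i)).1 (hi0 i)
    have e1 : h ⬝ᵥ P.mulVec h = ∑ i, ∑ j, h i * h j * P i j := by
      simp only [dotProduct, Matrix.mulVec, Finset.mul_sum]
      exact Finset.sum_congr rfl fun i _ => Finset.sum_congr rfl fun j _ => by ring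
    set M := P i0 i0 / x i0 with hMdef
    have e2 : ∑ i, ∑ j, h i * h j * (M * (x i + x j) / 2) = C * M * (h ⬝ᵥ x) := by
      have a : ∀ i j, h i * h j * (M * (x i + x j) / 2)
          = (M / 2) * ((h i * x i) * h j) + (M / 2) * (h i * (h j * x j)) := fun i j => by ring
      simp only [a, Finset.sum_add_distrib, ← Finset.mul_sum, ← Finset.sum_mul, hs, dotProduct]
      ring
    rw [div_le_iff₀ hxp, mul_div_assoc, ← hMdef, e1, ← e2]
    refine Finset.sum_le_sum fun i _ => Finset.sum_le_sum fun j _ => ?_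
    refine mul_le_mul_of_nonneg_left ?_ (mul_nonneg (h0 i) (h0 j))
    linarith [hij i j, hM i, hM j]
end

section
/- Let n be a nonempty finite index type, let P : Matrix n n ℝ be a symmetric positive semidefinite matrix, let x : n → ℝ be a vector with xᵢ > 0 for every i, and let C > 0. Then for every h in the scaled simplex S_C = {h : n → ℝ | hᵢ ≥ 0 for all i, ∑ᵢ hᵢ = C}, one has (hᵀ P h)/(hᵀ x) ≤ C · max_i (Pᵢᵢ/xᵢ), where the maximum is taken over all indices i ∈ n. -/
open Matrix

/-- The Rayleigh-type fractional objective is bounded on the scaled simplex by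
`C` times the maximal diagonal ratio `P i i / x i`. -/
theorem stmt_1 {n : Type*} [Fintype n] [DecidableEq n] [Nonempty n]
    (P : Matrix n n ℝ) (hP : P.PosSemidef) (x : n → ℝ) (hx : ∀ i, 0 < x i)
    (C : ℝ) (hC : 0 < C) :
    ∀ h ∈ {h : n → ℝ | (∀ i, 0 ≤ h i) ∧ ∑ i, h i = C},
      h ⬝ᵥ P.mulVec h / h ⬝ᵥ x ≤
        C * Finset.univ.sup' Finset.univ_nonempty (fun i => P i i / x i) := by
  rintro h ⟨h0, hs⟩
  set M := Finset.univ.sup' Finset.univ_nonempty (fun i => P i i / x i) with hM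
  have hMi : ∀ i, P i i ≤ M * x i := fun i => by
    have : P i i / x i ≤ M := Finset.le_sup' (fun i => P i i / x i) (Finset.mem_univ i)
    exact (div_le_iff₀ (hx i)).1 this
  have hsym : ∀ i j, P j i = P i j := fun i j => by
    simpa using hP.isHermitian.apply i j
  have hij : ∀ i j, 2 * P i j ≤ P i i + P j j := fun i j => by
    have := hP.dotProduct_mulVec_nonneg (Pi.single i 1 - Pi.single j 1)
    simp [Matrix.mulVec_sub, sub_dotProduct] at this
    have := hsym i j
    linarith
  have hpos : 0 < h ⬝ᵥ x := by
    obtain ⟨i, hi⟩ : ∃ i, 0 < h i := by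
      by_contra! hc
      have := Finset.sum_nonpos (s := Finset.univ) (fun i _ => hc i)
      linarith
    exact Finset.sum_pos' (fun i _ => mul_nonneg (h0 i) (hx i).le)
      ⟨i, Finset.mem_univ i, mul_pos hi (hx i)⟩
  rw [div_le_iff₀ hpos]
  have e1 : h ⬝ᵥ P.mulVec h = ∑ i, ∑ j, h i * h j * P i j := by
    simp only [dotProduct, mulVec, Finset.mul_sum]
    exact Finset.sum_congr rfl fun i _ => Finset.sum_congr rfl fun j _ => by ring
  have e2 : ∑ i, ∑ j, h i * h j * (M * x i) = C * M * h ⬝ᵥ x := by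
    rw [← hs]
    simp only [dotProduct, Finset.mul_sum, Finset.sum_mul]
    exact Finset.sum_congr rfl fun i _ => Finset.sum_congr rfl fun j _ => by ring
  have e3 : ∑ i, ∑ j, h i * h j * (M * x j) = C * M * h ⬝ᵥ x := by
    rw [← e2, Finset.sum_comm]
    exact Finset.sum_congr rfl fun i _ => Finset.sum_congr rfl fun j _ => by ring
  have key : ∑ i, ∑ j, 2 * (h i * h j * P i j) ≤
      ∑ i, ∑ j, (h i * h j * (M * x i) + h i * h j * (M * x j)) := by
    refine Finset.sum_le_sum fun i _ => Finset.sum_le_sum fun j _ => ?_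
    have := mul_le_mul_of_nonneg_left
      ((hij i j).trans (add_le_add (hMi i) (hMi j))) (mul_nonneg (h0 i) (h0 j))
    linarith
  simp only [Finset.sum_add_distrib] at key
  rw [e2, e3] at key
  have e4 : ∑ i, ∑ j, 2 * (h i * h j * P i j) = 2 * (h ⬝ᵥ P.mulVec h) := by
    rw [e1]
    simp only [Finset.mul_sum]
  rw [e4] at key
  linarith
end

section
/- Let n be a nonempty finite index type, let P : Matrix n n ℝ be a symmetric positive semidefinite matrix, let x : n → ℝ with xᵢ > 0 for all i, let C > 0, and let α ∈ ℝ. Then for every h in the scaled simplex S_C = {h : n → ℝ | hᵢ ≥ 0 for all i, ∑ᵢ hᵢ = C}, one has hᵀ P h − α · (hᵀ x) ≤ max_i (C² · Pᵢᵢ − α · C · xᵢ), where the maximum is over all indices i ∈ n; that is, the parametric objective of the fractional program is bounded on S_C by its maximum value over the scaled standard basis vectors C • e_i. -/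
open Matrix

theorem aux_entry {n : Type*} [Fintype n] [DecidableEq n]
    (P : Matrix n n ℝ) (hP : P.PosSemidef) (i j : n) : P i j ≤ (P i i + P j j) / 2 := by
  have h1 := hP.dotProduct_mulVec_nonneg (Pi.single i 1 - Pi.single j 1)
  have h2 : P j i = P i j := by simpa using hP.isHermitian.apply i j
  simp only [star_trivial, mulVec_sub, sub_dotProduct, dotProduct_sub, mulVec_single_one,
    single_one_dotProduct, col_apply] at h1
  linarith

/-- On the scaled simplex, the parametric objective of the fractional program is
bounded by its maximum value over the scaled standard basis vectors. -/
theorem stmt_6 {n : Type*} [Fintype n] [DecidableEq n] [Nonempty n]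
    (P : Matrix n n ℝ) (hP : P.PosSemidef) (x : n → ℝ) (hx : ∀ i, 0 < x i)
    (C : ℝ) (hC : 0 < C) (α : ℝ) :
    ∀ h ∈ {h : n → ℝ | (∀ i, 0 ≤ h i) ∧ ∑ i, h i = C},
      h ⬝ᵥ P.mulVec h - α * (h ⬝ᵥ x) ≤
        Finset.univ.sup' Finset.univ_nonempty
          (fun i : n => C ^ 2 * P i i - α * C * x i) := by
  rintro h ⟨h0, hs⟩
  set M := Finset.univ.sup' Finset.univ_nonempty
          (fun i : n => C ^ 2 * P i i - α * C * x i) with hM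
  have hle : ∀ i, C ^ 2 * P i i - α * C * x i ≤ M := fun i =>
    Finset.le_sup' (fun i : n => C ^ 2 * P i i - α * C * x i) (Finset.mem_univ i)
  have hq : h ⬝ᵥ P.mulVec h ≤ C * ∑ i, h i * P i i := by
    calc h ⬝ᵥ P.mulVec h = ∑ i, ∑ j, h i * (P i j * h j) := by
          simp only [dotProduct, mulVec, Finset.mul_sum]
      _ ≤ ∑ i, ∑ j, ((h i * P i i) * h j / 2 + h i * (h j * P j j) / 2) := by
          refine Finset.sum_le_sum fun i _ => Finset.sum_le_sum fun j _ => ?_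
          have := mul_le_mul_of_nonneg_left (aux_entry P hP i j) (mul_nonneg (h0 i) (h0 j))
          linarith
      _ = C * ∑ i, h i * P i i := by
          simp only [Finset.sum_add_distrib, ← Finset.sum_div, ← Finset.mul_sum, ← Finset.sum_mul,
            hs]
          ring
  have hsum : ∑ i, h i * (C ^ 2 * P i i - α * C * x i) ≤ C * M := by
    rw [← hs, Finset.sum_mul, hs]
    exact Finset.sum_le_sum fun i _ => mul_le_mul_of_nonneg_left (hle i) (h0 i)
  have he : ∑ i, h i * (C ^ 2 * P i i - α * C * x i)
      = C * (C * ∑ i, h i * P i i - α * (h ⬝ᵥ x)) := by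
    simp only [dotProduct, Finset.mul_sum, ← Finset.sum_sub_distrib]
    exact Finset.sum_congr rfl fun i _ => by ring
  rw [he] at hsum
  have := le_of_mul_le_mul_left hsum hC
  linarith
end

section
/- Let n be a finite index type, let P : Matrix n n ℝ be a symmetric positive semidefinite matrix, let h : n → ℝ, let β ∈ ℝ, and let R > 0. Define K = (β / (β² · hᵀ P h + R)) • (P h) and the posterior covariance P' = (I − β • (K hᵀ)) * P. Then det(P') = det(P) · R / (β² · hᵀ P h + R); in particular det(P') ≤ det(P). -/
open Matrix

/-- Determinant of the Kalman-type posterior covariance: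
`det P' = det P · R / (β² hᵀ P h + R) ≤ det P`. -/
theorem stmt_8 {n : Type*} [Fintype n] [DecidableEq n]
    (P : Matrix n n ℝ) (hP : P.PosSemidef) (h : n → ℝ) (β : ℝ) (R : ℝ)
    (hR : 0 < R) :
    (((1 : Matrix n n ℝ) -
          β • vecMulVec ((β / (β ^ 2 * (h ⬝ᵥ P.mulVec h) + R)) • P.mulVec h) h)
        * P).det =
      P.det * R / (β ^ 2 * (h ⬝ᵥ P.mulVec h) + R) ∧
    (((1 : Matrix n n ℝ) -
          β • vecMulVec ((β / (β ^ 2 * (h ⬝ᵥ P.mulVec h) + R)) • P.mulVec h) h)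
        * P).det ≤ P.det := by
  have hq : 0 ≤ h ⬝ᵥ P.mulVec h := by
    simpa using hP.dotProduct_mulVec_nonneg h
  have hd : 0 ≤ P.det := hP.det_nonneg
  generalize hv : P.mulVec h = v at *
  have hbq : 0 ≤ β ^ 2 * (h ⬝ᵥ v) := mul_nonneg (sq_nonneg β) hq
  have hD : 0 < β ^ 2 * (h ⬝ᵥ v) + R := by linarith
  have key : (((1 : Matrix n n ℝ) -
          β • vecMulVec ((β / (β ^ 2 * (h ⬝ᵥ v) + R)) • v) h)
        * P).det = P.det * R / (β ^ 2 * (h ⬝ᵥ v) + R) := by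
    have e : (1 : Matrix n n ℝ) - β • vecMulVec ((β / (β ^ 2 * (h ⬝ᵥ v) + R)) • v) h
        = 1 + replicateCol Unit ((-(β * (β / (β ^ 2 * (h ⬝ᵥ v) + R)))) • v)
            * replicateRow Unit h := by
      rw [← vecMulVec_eq]
      ext i j
      simp [vecMulVec_apply]
      ring
    rw [det_mul, e, det_one_add_replicateCol_mul_replicateRow, dotProduct_smul, smul_eq_mul]
    field_simp
    ring
  refine ⟨key, ?_⟩
  rw [key, div_le_iff₀ hD]
  nlinarith [mul_nonneg hd hbq]
end

section
/- Let n be a finite index type, let P : Matrix n n ℝ be a symmetric positive semidefinite matrix, let h : n → ℝ, let β ∈ ℝ, and let R > 0. Define K = (β / (β² · hᵀ P h + R)) • (P h) and the posterior covariance P' = (I − β • (K hᵀ)) * P. Then the trace satisfies Tr(P') = Tr(P) − β² · (hᵀ P² h) / (β² · hᵀ P h + R), where P² = P * P. In particular, when β ≠ 0 this equals Tr(P) − (hᵀ P² h) / (hᵀ P h + R/β²), the mean Cramér–Rao bound after the measurement. -/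
open Matrix

/-- Trace of the posterior covariance: the mean Cramér–Rao bound after one
measurement is `Tr P − β² hᵀ P² h / (β² hᵀ P h + R)`. -/
theorem stmt_9 {n : Type*} [Fintype n] [DecidableEq n]
    (P : Matrix n n ℝ) (hP : P.PosSemidef) (h : n → ℝ) (β : ℝ) (R : ℝ)
    (hR : 0 < R) :
    (((1 : Matrix n n ℝ) -
          β • vecMulVec ((β / (β ^ 2 * (h ⬝ᵥ P.mulVec h) + R)) • P.mulVec h) h)
        * P).trace =
      P.trace - β ^ 2 * (h ⬝ᵥ (P * P).mulVec h) / (β ^ 2 * (h ⬝ᵥ P.mulVec h) + R) ∧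
    (β ≠ 0 →
      (((1 : Matrix n n ℝ) -
            β • vecMulVec ((β / (β ^ 2 * (h ⬝ᵥ P.mulVec h) + R)) • P.mulVec h) h)
          * P).trace =
        P.trace - (h ⬝ᵥ (P * P).mulVec h) / (h ⬝ᵥ P.mulVec h + R / β ^ 2)) := by
  have key : (((1 : Matrix n n ℝ) -
          β • vecMulVec ((β / (β ^ 2 * (h ⬝ᵥ P.mulVec h) + R)) • P.mulVec h) h)
        * P).trace =
      P.trace - β ^ 2 * (h ⬝ᵥ (P * P).mulVec h) / (β ^ 2 * (h ⬝ᵥ P.mulVec h) + R) := by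
    have e : (vecMulVec (P.mulVec h) h * P).trace = h ⬝ᵥ (P * P).mulVec h := by
      rw [vecMulVec_mul, trace_vecMulVec, dotProduct_comm, ← mulVec_mulVec,
        dotProduct_mulVec h P]
    rw [sub_mul, one_mul, trace_sub, smul_mul_assoc, trace_smul, smul_vecMulVec,
      smul_mul_assoc, trace_smul, e, smul_eq_mul, smul_eq_mul]
    ring
  refine ⟨key, fun hβ => ?_⟩
  rw [key]
  have hb : β ^ 2 ≠ 0 := pow_ne_zero 2 hβ
  have e2 : β ^ 2 * (h ⬝ᵥ P.mulVec h) + R = β ^ 2 * (h ⬝ᵥ P.mulVec h + R / β ^ 2) := by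
    rw [mul_add, mul_div_cancel₀ _ hb]
  rw [e2, mul_div_mul_left _ _ hb]
end

section
/- Let n be a finite index type, let P : Matrix n n ℝ be a symmetric positive semidefinite matrix, let h : n → ℝ, let β ∈ ℝ, and let R > 0. Define K = (β / (β² · hᵀ P h + R)) • (P h) and the posterior covariance P' = (I − β • (K hᵀ)) * P. Then Tr(P') ≤ Tr(P); that is, each measurement never increases the mean Cramér–Rao bound. -/
open Matrix

/-- Each measurement never increases the mean Cramér–Rao bound:
`Tr P' ≤ Tr P`. -/
theorem stmt_10 {n : Type*} [Fintype n] [DecidableEq n]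
    (P : Matrix n n ℝ) (hP : P.PosSemidef) (h : n → ℝ) (β : ℝ) (R : ℝ)
    (hR : 0 < R) :
    (((1 : Matrix n n ℝ) -
          β • vecMulVec ((β / (β ^ 2 * (h ⬝ᵥ P.mulVec h) + R)) • P.mulVec h) h)
        * P).trace ≤ P.trace := by
  have hq : 0 ≤ h ⬝ᵥ P.mulVec h := by
    simpa using hP.dotProduct_mulVec_nonneg h
  have hT : Pᵀ = P := by
    simpa [Matrix.IsHermitian, conjTranspose_eq_transpose_of_trivial] using hP.isHermitian
  have hv : h ᵥ* P = P *ᵥ h := by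
    rw [← mulVec_transpose, hT]
  have hn : 0 ≤ (P *ᵥ h) ⬝ᵥ (P *ᵥ h) := by
    unfold dotProduct
    exact Finset.sum_nonneg fun i _ => mul_self_nonneg _
  have hd : 0 < β ^ 2 * (h ⬝ᵥ P.mulVec h) + R := by positivity
  rw [sub_mul, one_mul, trace_sub, smul_mul_assoc, trace_smul, vecMulVec_mul, trace_vecMulVec,
    hv, smul_dotProduct, smul_eq_mul, smul_eq_mul]
  have : 0 ≤ β * (β / (β ^ 2 * (h ⬝ᵥ P.mulVec h) + R) * ((P *ᵥ h) ⬝ᵥ (P *ᵥ h))) := by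
    rw [← mul_assoc, ← mul_div_assoc]
    exact mul_nonneg (div_nonneg (mul_self_nonneg β) hd.le) hn
  linarith
end

section
/- Let n be a finite index type, let P : Matrix n n ℝ be a symmetric positive definite matrix, let h : n → ℝ, let β ∈ ℝ, and let R > 0. Define K = (β / (β² · hᵀ P h + R)) • (P h) and the posterior covariance P' = (I − β • (K hᵀ)) * P. Then P' is symmetric and positive definite. -/
open Matrix

/-- The Kalman-type posterior covariance remains symmetric positive definite. -/
theorem stmt_11 {n : Type*} [Fintype n] [DecidableEq n]
    (P : Matrix n n ℝ) (hP : P.PosDef) (h : n → ℝ) (β : ℝ) (R : ℝ)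
    (hR : 0 < R) :
    (((1 : Matrix n n ℝ) -
          β • vecMulVec ((β / (β ^ 2 * (h ⬝ᵥ P.mulVec h) + R)) • P.mulVec h) h)
        * P).PosDef := by
  have hT : Pᵀ = P := by simpa [IsHermitian, conjTranspose_eq_transpose_of_trivial] using hP.1
  have hvm : ∀ v : n → ℝ, v ᵥ* P = P *ᵥ v := fun v => by
    conv_lhs => rw [← hT]
    exact vecMul_transpose P v
  have hnn : ∀ v : n → ℝ, 0 ≤ v ⬝ᵥ P *ᵥ v := fun v => by
    by_cases hv : v = 0
    · simp [hv]
    · simpa using (hP.dotProduct_mulVec_pos hv).le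
  have hq := hnn h
  set S := β ^ 2 * (h ⬝ᵥ P.mulVec h) + R with hS
  have hSpos : 0 < S := by positivity
  have key : ((1 : Matrix n n ℝ) - β • vecMulVec ((β / S) • P.mulVec h) h) * P
      = P - (β * (β / S)) • vecMulVec (P *ᵥ h) (P *ᵥ h) := by
    rw [sub_mul, one_mul, smul_mul_assoc, smul_vecMulVec, smul_mul_assoc, vecMulVec_mul, hvm,
      smul_smul]
  rw [key]
  refine PosDef.of_dotProduct_mulVec_pos ?_ ?_
  · rw [IsHermitian, conjTranspose_eq_transpose_of_trivial, transpose_sub, transpose_smul, hT,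
      transpose_vecMulVec]
  · intro x hx
    have ha : 0 < x ⬝ᵥ P *ᵥ x := by simpa using hP.dotProduct_mulVec_pos hx
    have hsym : h ⬝ᵥ P *ᵥ x = x ⬝ᵥ P *ᵥ h := by
      rw [dotProduct_mulVec, hvm, dotProduct_comm]
    have hy := hnn ((x ⬝ᵥ P *ᵥ x) • h - (x ⬝ᵥ P *ᵥ h) • x)
    simp only [mulVec_sub, mulVec_smul, dotProduct_sub, sub_dotProduct, smul_dotProduct,
      dotProduct_smul, smul_eq_mul, hsym] at hy
    have hx2 : (star x) ⬝ᵥ ((P - (β * (β / S)) • vecMulVec (P *ᵥ h) (P *ᵥ h)) *ᵥ x)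
        = x ⬝ᵥ P *ᵥ x - β * (β / S) * (x ⬝ᵥ P *ᵥ h) ^ 2 := by
      rw [star_trivial, sub_mulVec, smul_mulVec, vecMulVec_mulVec, dotProduct_sub]
      simp only [dotProduct_smul, smul_eq_mul, op_smul_eq_smul]
      rw [dotProduct_comm (P *ᵥ h) x]
      ring
    rw [hx2]
    generalize x ⬝ᵥ P *ᵥ x = a at *
    generalize x ⬝ᵥ P *ᵥ h = b at *
    generalize h ⬝ᵥ P *ᵥ h = q at *
    have hcs : 0 ≤ a * q - b ^ 2 := by
      refine nonneg_of_mul_nonneg_right (a := a) ?_ ha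
      linarith
    have : a - β * (β / S) * b ^ 2 = (R * a + β ^ 2 * (a * q - b ^ 2)) / S := by
      field_simp
      rw [hS]; ring
    rw [this]
    positivity
end

section
/- Let n be a finite index type, let P : Matrix n n ℝ be a symmetric positive definite matrix, let h : n → ℝ, let β ∈ ℝ, and let R > 0. Define K = (β / (β² · hᵀ P h + R)) • (P h) and the posterior covariance P' = (I − β • (K hᵀ)) * P. Then P' is invertible with inverse P'⁻¹ = P⁻¹ + (β²/R) • (h hᵀ); equivalently, P' * (P⁻¹ + (β²/R) • (h hᵀ)) = I. -/
open Matrix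

/-- Sherman–Morrison / information-form identity: the posterior Fisher
information matrix is `P⁻¹ + (β²/R) h hᵀ`. -/
theorem stmt_12 {n : Type*} [Fintype n] [DecidableEq n]
    (P : Matrix n n ℝ) (hP : P.PosDef) (h : n → ℝ) (β : ℝ) (R : ℝ)
    (hR : 0 < R) :
    IsUnit (((1 : Matrix n n ℝ) -
          β • vecMulVec ((β / (β ^ 2 * (h ⬝ᵥ P.mulVec h) + R)) • P.mulVec h) h)
        * P) ∧
    (((1 : Matrix n n ℝ) -
          β • vecMulVec ((β / (β ^ 2 * (h ⬝ᵥ P.mulVec h) + R)) • P.mulVec h) h)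
        * P)⁻¹ = P⁻¹ + (β ^ 2 / R) • vecMulVec h h ∧
    (((1 : Matrix n n ℝ) -
          β • vecMulVec ((β / (β ^ 2 * (h ⬝ᵥ P.mulVec h) + R)) • P.mulVec h) h)
        * P) * (P⁻¹ + (β ^ 2 / R) • vecMulVec h h) = 1 := by
  have hs : 0 ≤ h ⬝ᵥ P.mulVec h := by
    simpa using hP.posSemidef.dotProduct_mulVec_nonneg h
  have key : (((1 : Matrix n n ℝ) -
          β • vecMulVec ((β / (β ^ 2 * (h ⬝ᵥ P.mulVec h) + R)) • P.mulVec h) h)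
        * P) * (P⁻¹ + (β ^ 2 / R) • vecMulVec h h) = 1 := by
    have hPi : P * P⁻¹ = 1 :=
      Matrix.mul_nonsing_inv P ((Matrix.isUnit_iff_isUnit_det P).1 hP.isUnit)
    have hPh : P * vecMulVec h h = vecMulVec (P.mulVec h) h := Matrix.mul_vecMulVec P h h
    have hVV : vecMulVec (P.mulVec h) h * vecMulVec (P.mulVec h) h
        = (h ⬝ᵥ P.mulVec h) • vecMulVec (P.mulVec h) h := by
      rw [Matrix.vecMulVec_mul_vecMulVec, Matrix.vecMulVec_smul]
    rw [Matrix.mul_assoc, Matrix.mul_add, hPi, Matrix.mul_smul, hPh, Matrix.smul_vecMulVec]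
    generalize vecMulVec (P.mulVec h) h = V at *
    generalize h ⬝ᵥ P.mulVec h = s at *
    have hD : β ^ 2 * s + R ≠ 0 := by positivity
    have e : β ^ 2 / R - β * (β / (β ^ 2 * s + R))
        - β * (β / (β ^ 2 * s + R)) * (β ^ 2 / R) * s = 0 := by
      field_simp
      ring
    have e2 : (1 - β • (β / (β ^ 2 * s + R)) • V) * (1 + (β ^ 2 / R) • V)
        = 1 + (β ^ 2 / R - β * (β / (β ^ 2 * s + R))
        - β * (β / (β ^ 2 * s + R)) * (β ^ 2 / R) * s) • V := by
      simp only [sub_mul, mul_add, one_mul, mul_one, smul_mul_assoc, mul_smul_comm, hVV]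
      module
    rw [e2, e, zero_smul, add_zero]
  exact ⟨IsUnit.of_mul_eq_one _ key, Matrix.inv_eq_right_inv key, key⟩
end

section
/- Let n be a finite index type, let P : Matrix n n ℝ be a symmetric positive definite matrix, let h : n → ℝ, let β ∈ ℝ, and let R > 0. Define K = (β / (β² · hᵀ P h + R)) • (P h) and the posterior covariance P' = (I − β • (K hᵀ)) * P. Then the trace of the posterior Fisher information matrix satisfies Tr(P'⁻¹) = Tr(P⁻¹) + (β²/R) · ∑ᵢ hᵢ²; in particular Tr(P'⁻¹) ≥ Tr(P⁻¹), so the cumulative Fisher information is nondecreasing in the number of measurements. -/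
open Matrix

/-- The cumulative Fisher information is nondecreasing:
`Tr P'⁻¹ = Tr P⁻¹ + (β²/R) ∑ᵢ hᵢ²  ≥ Tr P⁻¹`. -/
theorem stmt_13 {n : Type*} [Fintype n] [DecidableEq n]
    (P : Matrix n n ℝ) (hP : P.PosDef) (h : n → ℝ) (β : ℝ) (R : ℝ)
    (hR : 0 < R) :
    ((((1 : Matrix n n ℝ) -
          β • vecMulVec ((β / (β ^ 2 * (h ⬝ᵥ P.mulVec h) + R)) • P.mulVec h) h)
        * P)⁻¹).trace = (P⁻¹).trace + (β ^ 2 / R) * ∑ i, (h i) ^ 2 ∧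
    (P⁻¹).trace ≤
      ((((1 : Matrix n n ℝ) -
            β • vecMulVec ((β / (β ^ 2 * (h ⬝ᵥ P.mulVec h) + R)) • P.mulVec h) h)
          * P)⁻¹).trace := by
  have hs : 0 ≤ h ⬝ᵥ P.mulVec h := by
    simpa using hP.posSemidef.dotProduct_mulVec_nonneg h
  have hdet : IsUnit P.det := (Matrix.isUnit_iff_isUnit_det P).1 hP.isUnit
  have hPP : P * P⁻¹ = 1 := Matrix.mul_nonsing_inv P hdet
  have hinv : (((1 : Matrix n n ℝ) -
          β • vecMulVec ((β / (β ^ 2 * (h ⬝ᵥ P.mulVec h) + R)) • P.mulVec h) h)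
        * P)⁻¹ = P⁻¹ + (β ^ 2 / R) • vecMulVec h h := by
    apply Matrix.inv_eq_right_inv
    have h1 : P * (P⁻¹ + (β ^ 2 / R) • vecMulVec h h)
        = 1 + (β ^ 2 / R) • vecMulVec (P.mulVec h) h := by
      rw [mul_add, hPP, Matrix.mul_smul, Matrix.mul_vecMulVec]
    rw [Matrix.mul_assoc, h1]
    generalize P.mulVec h = u at hs
    have hD : β ^ 2 * (h ⬝ᵥ u) + R ≠ 0 := by positivity
    have h2 : vecMulVec u h * vecMulVec u h = (h ⬝ᵥ u) • vecMulVec u h := by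
      rw [Matrix.vecMulVec_mul_vecMulVec]
      ext i j
      simp [vecMulVec_apply]
      try ring
    rw [Matrix.smul_vecMulVec, smul_smul, sub_mul, mul_add, mul_add, Matrix.smul_mul,
      Matrix.smul_mul, Matrix.mul_smul, Matrix.mul_smul, h2]
    ext i j
    simp only [one_mul, mul_one, Matrix.sub_apply, Matrix.add_apply, Matrix.smul_apply,
      smul_eq_mul]
    generalize vecMulVec u h i j = v
    field_simp
    ring
  have htr : (P⁻¹ + (β ^ 2 / R) • vecMulVec h h).trace
      = (P⁻¹).trace + (β ^ 2 / R) * ∑ i, (h i) ^ 2 := by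
    simp [Matrix.trace_add, Matrix.trace_smul, Matrix.trace, vecMulVec_apply, pow_two,
      Finset.sum_add_distrib, Finset.mul_sum]
  rw [hinv, htr]
  refine ⟨rfl, ?_⟩
  have : 0 ≤ (β ^ 2 / R) * ∑ i, (h i) ^ 2 := by positivity
  linarith
end
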